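/- arXiv:1907.08476 — 2 statements merged into one kernel-verified Lean document; each statement's English description precedes it below -/
import Mathlib

section
/- Let n ≥ 3 be an integer and let h be a continuous function on [0,∞) satisfying h(r) ≥ -(n-1)/r for all r > 0. If u is a C² solution of the ODE u''(r) + ((n-1)/r)u'(r) − (n-2)u(r)³ − (2(n-1)/r)u(r)² − ((n-1)/r²)u(r) + (n-4)u(r)u'(r) = [u'(r) + u(r)/r]·h(r) with initial conditions u(0) = 0 and u'(0) = α > 0, then u is not global: its maximal interval of existence [0,R) has R < ∞, and u(r) → +∞ as r ↑ R. -/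
/-- The ODE (equaz): `u'' + ((n-1)/r)u' - (n-2)u³ - (2(n-1)/r)u² - ((n-1)/r²)u + (n-4)uu'
    = [u' + u/r]·h(r)`, stated pointwise at `r` for a function `u` with first and second
    derivatives `u'`, `u''`. -/
def Equaz (n : ℕ) (h u u' u'' : ℝ → ℝ) (r : ℝ) : Prop :=
  u'' r + ((n : ℝ) - 1) / r * u' r - ((n : ℝ) - 2) * u r ^ 3
    - 2 * ((n : ℝ) - 1) / r * u r ^ 2 - ((n : ℝ) - 1) / r ^ 2 * u r
    + ((n : ℝ) - 4) * u r * u' r = (u' r + u r / r) * h r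

/-- `u` (with derivatives `u'`, `u''`) is a C² solution of (equaz) on the set `S`
    (typically `[0,R)` or `[0,∞)`) with initial conditions `u(0) = 0`, `u'(0) = α`. -/
def SolOn (n : ℕ) (h : ℝ → ℝ) (α : ℝ) (u u' u'' : ℝ → ℝ) (S : Set ℝ) : Prop :=
  (∀ r ∈ S, HasDerivWithinAt u (u' r) S r) ∧
  (∀ r ∈ S, HasDerivWithinAt u' (u'' r) S r) ∧
  ContinuousOn u'' S ∧
  u 0 = 0 ∧ u' 0 = α ∧
  ∀ r ∈ S, 0 < r → Equaz n h u u' u'' r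

/-- `[0,R)` is a maximal interval of existence for the solution `u`:
    `u` admits no extension to a solution on a strictly larger interval `[0,R')`. -/
def MaximalOn (n : ℕ) (h : ℝ → ℝ) (α : ℝ) (u : ℝ → ℝ) (R : ℝ) : Prop :=
  ¬ ∃ (R' : ℝ) (v v' v'' : ℝ → ℝ), R < R' ∧
      SolOn n h α v v' v'' (Set.Ico 0 R') ∧ Set.EqOn v u (Set.Ico 0 R)

/-!
Along a solution, `q = u' - u² / 2` satisfies
`q' + 2 ((n-1)/r + (n-2)u) q = (u' + u/r) ((n-1)u + h + (n-1)/r)`,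
and `q(0) = α > 0`. As long as `q > 0`, the function `u` increases from `0`, so the right-hand side
is nonnegative and an integrating factor keeps `q` positive. Hence `u' > u² / 2` throughout, and `u`
blows up in finite time. On a maximal interval `[0, R)` the increasing function `u` is unbounded:
otherwise the equation, linear in `u'` up to bounded coefficients, bounds `u'` by Grönwall's
inequality, and the phase curve `(u, u')` continues past `R`.
-/

open Set Filter Topology Function

section DifferentialInequalities

theorem forall_Icc_pos_of_forall_Ico_pos {f : ℝ → ℝ} {a b : ℝ} (hf : ContinuousOn f (Icc a b))
    (hfa : 0 < f a) (hstep : ∀ t ∈ Ioc a b, (∀ s ∈ Ico a t, 0 < f s) → 0 < f t) :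
    ∀ t ∈ Icc a b, 0 < f t := by
  by_contra! hneg
  obtain ⟨t₁, ht₁, hft₁⟩ := hneg
  have hcompact : IsCompact (Icc a b ∩ f ⁻¹' Iic 0) :=
    isCompact_Icc.of_isClosed_subset (hf.preimage_isClosed_of_isClosed isClosed_Icc isClosed_Iic)
      inter_subset_left
  obtain ⟨t, ⟨ht, hft⟩, hleast⟩ := hcompact.exists_isLeast ⟨t₁, ht₁, hft₁⟩
  have hat : a ≠ t := by
    rintro rfl
    exact hfa.not_ge hft
  refine (hstep t ⟨ht.1.lt_of_ne hat, ht.2⟩ fun s hs => ?_).not_ge hft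
  by_contra! hfs
  exact (hleast ⟨⟨hs.1, hs.2.le.trans ht.2⟩, hfs⟩).not_gt hs.2

theorem pos_of_deriv_add_mul_nonneg {f f' p : ℝ → ℝ} {a b : ℝ} (hab : a ≤ b)
    (hf : ContinuousOn f (Icc a b)) (hf' : ∀ t ∈ Ioo a b, HasDerivAt f (f' t) t)
    (hp : ContinuousOn p (Icc a b)) (hle : ∀ t ∈ Ioo a b, 0 ≤ f' t + p t * f t)
    (hfa : 0 < f a) : 0 < f b := by
  set P : ℝ → ℝ := fun t => ∫ s in a..t, p s with hP
  have hP_cont : ContinuousOn P (Icc a b) := by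
    rw [← uIcc_of_le hab] at hp ⊢
    exact intervalIntegral.continuousOn_primitive_interval' hp.intervalIntegrable left_mem_uIcc
  have hP_deriv : ∀ t ∈ Ioo a b, HasDerivAt P (p t) t := fun t ht =>
    intervalIntegral.integral_hasDerivAt_right
      ((hp.mono (Icc_subset_Icc_right ht.2.le)).intervalIntegrable_of_Icc ht.1.le)
      ((hp.mono Ioo_subset_Icc_self).stronglyMeasurableAtFilter isOpen_Ioo t ht)
      (hp.continuousAt (Icc_mem_nhds ht.1 ht.2))
  have hmono : MonotoneOn (fun t => Real.exp (P t) * f t) (Icc a b) := by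
    refine monotoneOn_of_hasDerivWithinAt_nonneg (convex_Icc a b) (hP_cont.rexp.mul hf)
      (f' := fun t => Real.exp (P t) * p t * f t + Real.exp (P t) * f' t) ?_ ?_ <;>
      rw [interior_Icc] <;> intro t ht
    · exact ((hP_deriv t ht).exp.mul (hf' t ht)).hasDerivWithinAt
    · nlinarith [mul_nonneg (Real.exp_pos (P t)).le (hle t ht)]
  have hle_b : Real.exp (P a) * f a ≤ Real.exp (P b) * f b :=
    hmono (left_mem_Icc.2 hab) (right_mem_Icc.2 hab) hab
  exact pos_of_mul_pos_right ((mul_pos (Real.exp_pos _) hfa).trans_le hle_b) (Real.exp_pos _).le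

theorem mul_sub_lt_inv_of_mul_sq_le_deriv {f f' : ℝ → ℝ} {a b c : ℝ} (hab : a ≤ b)
    (hf : ContinuousOn f (Icc a b)) (hf' : ∀ t ∈ Ioo a b, HasDerivAt f (f' t) t)
    (hpos : ∀ t ∈ Icc a b, 0 < f t) (hle : ∀ t ∈ Ioo a b, c * f t ^ 2 ≤ f' t) :
    c * (b - a) < (f a)⁻¹ := by
  have hanti : AntitoneOn (fun t => (f t)⁻¹ + c * t) (Icc a b) := by
    refine antitoneOn_of_hasDerivWithinAt_nonpos (convex_Icc a b)
      ((hf.inv₀ fun t ht => (hpos t ht).ne').add (continuousOn_const.mul continuousOn_id))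
      (f' := fun t => -f' t / f t ^ 2 + c * 1) ?_ ?_ <;>
      rw [interior_Icc] <;> intro t ht <;> have hft := hpos t (Ioo_subset_Icc_self ht)
    · exact (((hf' t ht).inv hft.ne').add ((hasDerivAt_id t).const_mul c)).hasDerivWithinAt
    · rw [neg_div, mul_one, neg_add_nonpos_iff, le_div_iff₀ (by positivity)]
      exact hle t ht
  have hle_a : (f b)⁻¹ + c * b ≤ (f a)⁻¹ + c * a :=
    hanti (left_mem_Icc.2 hab) (right_mem_Icc.2 hab) hab
  linarith [inv_pos.2 (hpos b (right_mem_Icc.2 hab))]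

theorem exists_norm_le_of_norm_deriv_le_mul_add {E : Type*} [NormedAddCommGroup E]
    [NormedSpace ℝ E] {f f' : ℝ → E} {a b K ε : ℝ} (hK : 0 ≤ K) (hε : 0 ≤ ε)
    (hf : ∀ t ∈ Ico a b, HasDerivAt f (f' t) t)
    (hle : ∀ t ∈ Ico a b, ‖f' t‖ ≤ K * ‖f t‖ + ε) :
    ∃ C, ∀ t ∈ Ico a b, ‖f t‖ ≤ C := by
  refine ⟨gronwallBound ‖f a‖ K ε (b - a), fun t ht => ?_⟩
  have hsub : Icc a t ⊆ Ico a b := Icc_subset_Ico_right ht.2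
  calc ‖f t‖ ≤ gronwallBound ‖f a‖ K ε (t - a) :=
        norm_le_gronwallBound_of_norm_deriv_right_le
          (fun s hs => (hf s (hsub hs)).continuousAt.continuousWithinAt)
          (fun s hs => (hf s (hsub (Ico_subset_Icc_self hs))).hasDerivWithinAt) le_rfl
          (fun s hs => hle s (hsub (Ico_subset_Icc_self hs))) t (right_mem_Icc.2 ht.1)
    _ ≤ gronwallBound ‖f a‖ K ε (b - a) :=
        gronwallBound_mono (norm_nonneg _) hε hK (by linarith [ht.2])

theorem tendsto_nhdsLT_atTop_of_monotoneOn {f : ℝ → ℝ} {a b : ℝ} (hf : MonotoneOn f (Ico a b))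
    (hunbdd : ¬ BddAbove (f '' Ico a b)) : Tendsto f (𝓝[<] b) atTop := by
  refine tendsto_atTop.2 fun M => ?_
  obtain ⟨_, ⟨s, hs, rfl⟩, hMs⟩ := not_bddAbove_iff.1 hunbdd M
  filter_upwards [Ioo_mem_nhdsLT hs.2] with t ht
  exact hMs.le.trans (hf hs ⟨hs.1.trans ht.1.le, ht.2⟩ ht.1.le)

end DifferentialInequalities

section Continuation

variable {E : Type*} [NormedAddCommGroup E] [NormedSpace ℝ E]

theorem exists_tendsto_nhdsLT_of_norm_deriv_le [CompleteSpace E] {f f' : ℝ → E} {b C : ℝ}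
    (hf : ∀ᶠ t in 𝓝[<] b, HasDerivAt f (f' t) t) (hC : ∀ᶠ t in 𝓝[<] b, ‖f' t‖ ≤ C) :
    ∃ x, Tendsto f (𝓝[<] b) (𝓝 x) := by
  obtain ⟨a, hab, ha⟩ := mem_nhdsLT_iff_exists_Ioo_subset.1 (hf.and hC)
  have hlip : LipschitzOnWith C.toNNReal f (Ioo a b) :=
    (convex_Ioo a b).lipschitzOnWith_of_nnnorm_hasDerivWithin_le (f' := f')
      (fun t ht => (ha ht).1.hasDerivWithinAt) fun t ht => by
        rw [← NNReal.coe_le_coe, coe_nnnorm]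
        exact (ha ht).2.trans C.le_coe_toNNReal
  have hcauchy : Cauchy (𝓝[<] b) := cauchy_nhds.mono nhdsWithin_le_nhds
  exact cauchy_map_iff_exists_tendsto.1
    (hcauchy.map_of_le hlip.uniformContinuousOn (le_principal_iff.2 (Ioo_mem_nhdsLT hab)))

variable {F : ℝ → E → E} {F' : ℝ → E → E →L[ℝ] E} {t₀ : ℝ} {x₀ : E}

theorem exists_isIntegralCurveAt [CompleteSpace E]
    (hF : ∀ᶠ p in 𝓝 (t₀, x₀), ContinuousAt (uncurry F) p)
    (hF' : ∀ᶠ p in 𝓝 (t₀, x₀), HasFDerivAt (F p.1) (F' p.1 p.2) p.2)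
    (hF'_cont : ContinuousAt (uncurry F') (t₀, x₀)) :
    ∃ γ, γ t₀ = x₀ ∧ IsIntegralCurveAt γ F t₀ := by
  obtain ⟨L, hL⟩ : ∃ L : NNReal, ∀ᶠ p in 𝓝 (t₀, x₀), ‖uncurry F p‖ ≤ L :=
    ⟨‖uncurry F (t₀, x₀)‖₊ + 1, hF.self_of_nhds.norm.eventually_le_const (lt_add_one _)⟩
  obtain ⟨K, hK⟩ : ∃ K : NNReal, ∀ᶠ p in 𝓝 (t₀, x₀), ‖uncurry F' p‖ ≤ K :=
    ⟨‖uncurry F' (t₀, x₀)‖₊ + 1, hF'_cont.norm.eventually_le_const (lt_add_one _)⟩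
  obtain ⟨ρ, hρ, hball⟩ := Metric.nhds_basis_closedBall.eventually_iff.1
    (((hF.and hF').and (hL.and hK)))
  lift ρ to NNReal using hρ.le
  set ε : ℝ := min ρ (ρ / (L + 1))
  have hε : 0 < ε := by positivity
  have hmem {t : ℝ} (ht : t ∈ Icc (t₀ - ε) (t₀ + ε)) {x : E} (hx : x ∈ Metric.closedBall x₀ ρ) :
      (t, x) ∈ Metric.closedBall (t₀, x₀) (ρ : ℝ) := by
    rw [← closedBall_prod_same]
    rw [← Real.closedBall_eq_Icc] at ht
    exact ⟨Metric.closedBall_subset_closedBall (min_le_left _ _) ht, hx⟩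
  have ht₀ : t₀ ∈ Icc (t₀ - ε) (t₀ + ε) := ⟨by linarith, by linarith⟩
  have hPL : IsPicardLindelof F (⟨t₀, ht₀⟩ : Icc (t₀ - ε) (t₀ + ε)) x₀ ρ 0 L K :=
    { lipschitzOnWith t ht := (convex_closedBall x₀ _).lipschitzOnWith_of_nnnorm_hasFDerivWithin_le
        (fun x hx => (hball (hmem ht hx)).1.2.hasFDerivWithinAt)
        (fun x hx => (hball (hmem ht hx)).2.2)
      continuousOn x hx t ht := ((hball (hmem ht hx)).1.1.comp
        (f := fun s => (s, x)) (by fun_prop)).continuousWithinAt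
      norm_le t ht x hx := (hball (hmem ht hx)).2.1
      mul_max_le := by
        change L * max (t₀ + ε - t₀) (t₀ - (t₀ - ε)) ≤ ρ - _
        rw [add_sub_cancel_left, sub_sub_cancel, max_self, NNReal.coe_zero, sub_zero]
        calc L * ε ≤ (L + 1) * (ρ / (L + 1)) := by
              gcongr
              · linarith
              · exact min_le_right _ _
          _ = ρ := by field_simp }
  obtain ⟨γ, hγ₀, hγ⟩ := hPL.exists_eq_forall_mem_Icc_hasDerivWithinAt₀
  exact ⟨γ, hγ₀, IsIntegralCurveOn.isIntegralCurveAt hγ (Icc_mem_nhds (by linarith) (by linarith))⟩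

theorem hasDerivAt_piecewise_Iio {γ γ' η : ℝ → E} {e : E}
    (hγ : ∀ᶠ t in 𝓝[<] t₀, HasDerivAt γ (γ' t) t) (hlim : Tendsto γ (𝓝[<] t₀) (𝓝 (η t₀)))
    (hlim' : Tendsto γ' (𝓝[<] t₀) (𝓝 e)) (hη : HasDerivAt η e t₀) :
    HasDerivAt ((Iio t₀).piecewise γ η) e t₀ := by
  have heq : (Iio t₀).piecewise γ η =ᶠ[𝓝[<] t₀] γ :=
    (piecewise_eqOn _ _ _).eventuallyEq_of_mem self_mem_nhdsWithin
  have hderiv : ∀ᶠ t in 𝓝[<] t₀, HasDerivAt ((Iio t₀).piecewise γ η) (γ' t) t := by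
    filter_upwards [hγ, self_mem_nhdsWithin] with t ht hlt
    exact ht.congr_of_eventuallyEq
      ((piecewise_eqOn _ _ _).eventuallyEq_of_mem (Iio_mem_nhds hlt))
  have hval : (Iio t₀).piecewise γ η t₀ = η t₀ := piecewise_eq_of_notMem _ _ _ self_notMem_Iio
  have hleft : HasDerivWithinAt ((Iio t₀).piecewise γ η) e (Iic t₀) t₀ := by
    refine hasDerivWithinAt_Iic_of_tendsto_deriv
      (s := Iio t₀ ∩ {t | HasDerivAt ((Iio t₀).piecewise γ η) (γ' t) t})
      (fun t ht => ht.2.differentiableAt.differentiableWithinAt) ?_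
      (inter_mem self_mem_nhdsWithin hderiv)
      (hlim'.congr' (hderiv.mono fun t ht => ht.deriv.symm))
    rw [ContinuousWithinAt, hval]
    exact (hlim.congr' heq.symm).mono_left (nhdsWithin_mono _ inter_subset_left)
  have hright : HasDerivWithinAt ((Iio t₀).piecewise γ η) e (Ici t₀) t₀ :=
    hη.hasDerivWithinAt.congr (fun t ht => piecewise_eq_of_notMem _ _ _ (notMem_Iio.2 ht)) hval
  simpa only [Iic_union_Ici, hasDerivWithinAt_univ] using hleft.union hright

theorem exists_isIntegralCurveOn_Ioo_extension_of_tendsto [CompleteSpace E] {γ : ℝ → E} {a : ℝ}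
    (hat₀ : a < t₀) (hγ : IsIntegralCurveOn γ F (Ioo a t₀)) (hlim : Tendsto γ (𝓝[<] t₀) (𝓝 x₀))
    (hF : ∀ᶠ p in 𝓝 (t₀, x₀), ContinuousAt (uncurry F) p)
    (hF' : ∀ᶠ p in 𝓝 (t₀, x₀), HasFDerivAt (F p.1) (F' p.1 p.2) p.2)
    (hF'_cont : ContinuousAt (uncurry F') (t₀, x₀)) :
    ∃ b > t₀, ∃ δ, IsIntegralCurveOn δ F (Ioo a b) ∧ EqOn δ γ (Iio t₀) := by
  obtain ⟨η, rfl, hη⟩ := exists_isIntegralCurveAt hF hF' hF'_cont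
  obtain ⟨b, hb, hηb⟩ := mem_nhdsGE_iff_exists_Ico_subset.1 (mem_nhdsWithin_of_mem_nhds hη)
  refine ⟨b, hb, (Iio t₀).piecewise γ η, fun t ht => HasDerivAt.hasDerivWithinAt ?_,
    piecewise_eqOn _ _ _⟩
  have hγ_deriv : ∀ t ∈ Ioo a t₀, HasDerivAt γ (F t (γ t)) t := fun t ht =>
    (hγ t ht).hasDerivAt (isOpen_Ioo.mem_nhds ht)
  rcases lt_trichotomy t t₀ with hlt | rfl | hgt
  · rw [piecewise_eq_of_mem _ _ _ (mem_Iio.2 hlt)]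
    exact (hγ_deriv t ⟨ht.1, hlt⟩).congr_of_eventuallyEq
      ((piecewise_eqOn _ _ _).eventuallyEq_of_mem (Iio_mem_nhds hlt))
  · rw [piecewise_eq_of_notMem _ _ _ self_notMem_Iio]
    refine hasDerivAt_piecewise_Iio (γ' := fun s => F s (γ s))
      (eventually_of_mem (Ioo_mem_nhdsLT hat₀) hγ_deriv) hlim ?_ hη.hasDerivAt
    exact hF.self_of_nhds.tendsto.comp
      ((tendsto_nhdsWithin_of_tendsto_nhds tendsto_id).prodMk_nhds hlim)
  · rw [piecewise_eq_of_notMem _ _ _ (notMem_Iio.2 hgt.le)]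
    exact HasDerivAt.congr_of_eventuallyEq (hηb ⟨hgt.le, ht.2⟩)
      ((piecewise_eqOn_compl _ _ _).eventuallyEq_of_mem
        (mem_of_superset (Ioi_mem_nhds hgt) fun s hs => notMem_Iio.2 (le_of_lt hs)))

theorem exists_isIntegralCurveOn_Ioo_extension_of_norm_le [ProperSpace E] {γ : ℝ → E} {a C : ℝ}
    {s : Set ℝ} (hat₀ : a < t₀) (hs : s ∈ 𝓝 t₀)
    (hγ : IsIntegralCurveOn γ F (Ioo a t₀)) (hC : ∀ᶠ t in 𝓝[<] t₀, ‖γ t‖ ≤ C)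
    (hF : ContinuousOn (uncurry F) (s ×ˢ univ))
    (hF' : ∀ t ∈ s, ∀ x, HasFDerivAt (F t) (F' t x) x)
    (hF'_cont : ContinuousOn (uncurry F') (s ×ˢ univ)) :
    ∃ b > t₀, ∃ δ, IsIntegralCurveOn δ F (Ioo a b) ∧ EqOn δ γ (Iio t₀) := by
  have hs_nhds (x : E) : s ×ˢ univ ∈ 𝓝 (t₀, x) := prod_mem_nhds hs univ_mem
  obtain ⟨k, hk, hks, hk_compact⟩ := local_compact_nhds hs
  obtain ⟨L, hL⟩ := (hk_compact.prod (isCompact_closedBall (0 : E) C)).exists_bound_of_continuousOn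
    (hF.mono (prod_mono hks (subset_univ _)))
  have hbound : ∀ᶠ t in 𝓝[<] t₀, ‖F t (γ t)‖ ≤ L := by
    filter_upwards [mem_nhdsWithin_of_mem_nhds hk, hC] with t htk htC
    exact hL (t, γ t) ⟨htk, mem_closedBall_zero_iff.2 htC⟩
  obtain ⟨x₀, hlim⟩ := exists_tendsto_nhdsLT_of_norm_deriv_le
    (eventually_of_mem (Ioo_mem_nhdsLT hat₀) fun t ht =>
      (hγ t ht).hasDerivAt (isOpen_Ioo.mem_nhds ht)) hbound
  refine exists_isIntegralCurveOn_Ioo_extension_of_tendsto hat₀ hγ hlim ?_ ?_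
    (hF'_cont.continuousAt (hs_nhds x₀))
  · exact (eventually_mem_nhds_iff.2 (hs_nhds x₀)).mono fun p hp => hF.continuousAt hp
  · filter_upwards [hs_nhds x₀] with p hp using hF' p.1 hp.1 p.2

end Continuation

namespace Equaz

/-- The coefficient of `u'` when (equaz) is solved for `u''`, at `u r = x`. -/
noncomputable def drag (n : ℕ) (h : ℝ → ℝ) (r x : ℝ) : ℝ :=
  h r - (n - 1) / r - (n - 4) * x

/-- The part of (equaz), solved for `u''`, that is free of `u'`, at `u r = x`. -/
noncomputable def force (n : ℕ) (h : ℝ → ℝ) (r x : ℝ) : ℝ :=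
  (n - 2) * x ^ 3 + 2 * (n - 1) / r * x ^ 2 + ((n - 1) / r ^ 2 + h r / r) * x

/-- The time-dependent vector field on the phase plane whose integral curves `(u, u')` are the
solutions of (equaz) for `r > 0`. -/
noncomputable def phaseField (n : ℕ) (h : ℝ → ℝ) (r : ℝ) (p : ℝ × ℝ) : ℝ × ℝ :=
  (p.2, drag n h r p.1 * p.2 + force n h r p.1)

/-- The derivative of `phaseField n h r` at `p`, in closed form so that its joint continuity in
`(r, p)` is visible. -/
noncomputable def phaseFieldDeriv (n : ℕ) (h : ℝ → ℝ) (r : ℝ) (p : ℝ × ℝ) : ℝ × ℝ →L[ℝ] ℝ × ℝ :=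
  .inl ℝ ℝ ℝ ∘L .snd ℝ ℝ ℝ + drag n h r p.1 • (.inr ℝ ℝ ℝ ∘L .snd ℝ ℝ ℝ) +
    (3 * (n - 2) * p.1 ^ 2 + 4 * (n - 1) / r * p.1 + ((n - 1) / r ^ 2 + h r / r)
      - (n - 4) * p.2) • (.inr ℝ ℝ ℝ ∘L .fst ℝ ℝ ℝ)

variable {n : ℕ} {h u u' u'' : ℝ → ℝ} {r : ℝ}

theorem equaz_iff : Equaz n h u u' u'' r ↔ u'' r = (phaseField n h r (u r, u' r)).2 := by
  simp only [Equaz, phaseField, drag, force]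
  constructor <;> intro heq <;> linear_combination heq

theorem continuousOn_linear_coeff (n : ℕ) (hh : ContinuousOn h (Ioi 0)) :
    ContinuousOn (fun r => (n - 1) / r ^ 2 + h r / r) (Ioi 0) :=
  (continuousOn_const.div (by fun_prop) fun _ hr => pow_ne_zero 2 (ne_of_gt hr)).add
    (hh.div continuousOn_id fun _ hr => ne_of_gt hr)

theorem continuousOn_drag (hh : ContinuousOn h (Ioi 0)) :
    ContinuousOn (uncurry (drag n h)) (Ioi 0 ×ˢ univ) := by
  have hcoeff : ContinuousOn (fun r => h r - (n - 1) / r) (Ioi 0) :=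
    hh.sub (continuousOn_const.div continuousOn_id fun _ hr => ne_of_gt hr)
  exact (hcoeff.comp continuousOn_fst fun p hp => hp.1).sub (by fun_prop)

theorem continuousOn_force (hh : ContinuousOn h (Ioi 0)) :
    ContinuousOn (uncurry (force n h)) (Ioi 0 ×ˢ univ) := by
  have hquad : ContinuousOn (fun p : ℝ × ℝ => 2 * ((n : ℝ) - 1) / p.1) (Ioi 0 ×ˢ univ) :=
    continuousOn_const.div continuousOn_fst fun p hp => ne_of_gt hp.1
  have hlin := (continuousOn_linear_coeff n hh).comp continuousOn_fst
    fun (p : ℝ × ℝ) (hp : p ∈ Ioi 0 ×ˢ univ) => hp.1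
  exact ((by fun_prop : Continuous fun p : ℝ × ℝ => (n - 2) * p.2 ^ 3).continuousOn.add
    (hquad.mul (by fun_prop))).add (hlin.mul continuousOn_snd)

theorem continuousOn_phaseField (hh : ContinuousOn h (Ioi 0)) :
    ContinuousOn (uncurry (phaseField n h)) (Ioi 0 ×ˢ univ) := by
  have hproj : MapsTo (fun p : ℝ × ℝ × ℝ => (p.1, p.2.1)) (Ioi 0 ×ˢ univ) (Ioi 0 ×ˢ univ) :=
    fun p hp => ⟨hp.1, mem_univ _⟩
  have hdrag := (continuousOn_drag (n := n) hh).comp (by fun_prop) hproj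
  have hforce := (continuousOn_force (n := n) hh).comp (by fun_prop) hproj
  exact (continuousOn_snd.snd).prodMk ((hdrag.mul continuousOn_snd.snd).add hforce)

theorem hasFDerivAt_phaseField (p : ℝ × ℝ) :
    HasFDerivAt (phaseField n h r) (phaseFieldDeriv n h r p) p := by
  have hfst : HasFDerivAt Prod.fst (ContinuousLinearMap.fst ℝ ℝ ℝ) p := hasFDerivAt_fst
  have hsnd : HasFDerivAt Prod.snd (ContinuousLinearMap.snd ℝ ℝ ℝ) p := hasFDerivAt_snd
  have hdrag : HasFDerivAt (fun p : ℝ × ℝ => drag n h r p.1) _ p :=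
    (hfst.const_mul ((n : ℝ) - 4)).const_sub (h r - (n - 1) / r)
  have hforce : HasFDerivAt (fun p : ℝ × ℝ => force n h r p.1) _ p :=
    (((hfst.pow 3).const_mul ((n : ℝ) - 2)).add
      ((hfst.pow 2).const_mul (2 * ((n : ℝ) - 1) / r))).add
      (hfst.const_mul (((n : ℝ) - 1) / r ^ 2 + h r / r))
  refine (hsnd.prodMk ((hdrag.mul hsnd).add hforce)).congr_fderiv ?_
  ext <;> simp [phaseFieldDeriv]
  ring

theorem continuousOn_phaseFieldDeriv (hh : ContinuousOn h (Ioi 0)) :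
    ContinuousOn (uncurry (phaseFieldDeriv n h)) (Ioi 0 ×ˢ univ) := by
  have hdrag := (continuousOn_drag (n := n) hh).comp (f := fun p : ℝ × ℝ × ℝ => (p.1, p.2.1))
    (s := Ioi 0 ×ˢ univ) (by fun_prop) fun p hp => ⟨hp.1, mem_univ _⟩
  have hquad : ContinuousOn (fun p : ℝ × ℝ × ℝ => 4 * ((n : ℝ) - 1) / p.1) (Ioi 0 ×ˢ univ) :=
    continuousOn_const.div continuousOn_fst fun p hp => ne_of_gt hp.1
  have hlin := (continuousOn_linear_coeff n hh).comp continuousOn_fst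
    fun (p : ℝ × ℝ × ℝ) (hp : p ∈ Ioi 0 ×ˢ univ) => hp.1
  have hstiff := (((by fun_prop : Continuous fun p : ℝ × ℝ × ℝ =>
    3 * ((n : ℝ) - 2) * p.2.1 ^ 2).continuousOn.add (hquad.mul continuousOn_snd.fst)).add hlin).sub
    ((by fun_prop : Continuous fun p : ℝ × ℝ × ℝ => ((n : ℝ) - 4) * p.2.2).continuousOn)
  exact (continuousOn_const.add (hdrag.smul continuousOn_const)).add
    (hstiff.smul continuousOn_const)

theorem deriv_sub_sq_div_two_add_mul_eq (heq : Equaz n h u u' u'' r) :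
    u'' r - u r * u' r + 2 * ((n - 1) / r + (n - 2) * u r) * (u' r - u r ^ 2 / 2) =
      (u' r + u r / r) * ((n - 1) * u r + (h r - -((n : ℝ) - 1) / r)) := by
  rw [equaz_iff.1 heq]
  simp only [phaseField, drag, force]
  ring

end Equaz

namespace SolOn

variable {n : ℕ} {h u u' u'' : ℝ → ℝ} {α R : ℝ} {S T : Set ℝ}

theorem mono (H : SolOn n h α u u' u'' S) (hTS : T ⊆ S) : SolOn n h α u u' u'' T :=
  let ⟨hu, hu', hu'', h0, h0', heq⟩ := H
  ⟨fun r hr => (hu r (hTS hr)).mono hTS, fun r hr => (hu' r (hTS hr)).mono hTS, hu''.mono hTS,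
    h0, h0', fun r hr => heq r (hTS hr)⟩

theorem apply_zero (H : SolOn n h α u u' u'' S) : u 0 = 0 :=
  H.2.2.2.1

theorem deriv_apply_zero (H : SolOn n h α u u' u'' S) : u' 0 = α :=
  H.2.2.2.2.1

theorem equaz {r : ℝ} (H : SolOn n h α u u' u'' S) (hr : r ∈ S) (hr_pos : 0 < r) :
    Equaz n h u u' u'' r :=
  H.2.2.2.2.2 r hr hr_pos

theorem continuousOn (H : SolOn n h α u u' u'' S) : ContinuousOn u S :=
  fun r hr => (H.1 r hr).continuousWithinAt

theorem continuousOn_deriv (H : SolOn n h α u u' u'' S) : ContinuousOn u' S :=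
  fun r hr => (H.2.1 r hr).continuousWithinAt

theorem hasDerivAt (H : SolOn n h α u u' u'' (Ico 0 R)) {r : ℝ} (hr : r ∈ Ioo 0 R) :
    HasDerivAt u (u' r) r :=
  (H.1 r (Ioo_subset_Ico_self hr)).hasDerivAt (Ico_mem_nhds hr.1 hr.2)

theorem hasDerivAt_deriv (H : SolOn n h α u u' u'' (Ico 0 R)) {r : ℝ} (hr : r ∈ Ioo 0 R) :
    HasDerivAt u' (u'' r) r :=
  (H.2.1 r (Ioo_subset_Ico_self hr)).hasDerivAt (Ico_mem_nhds hr.1 hr.2)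

theorem snd_deriv_eq (H : SolOn n h α u u' u'' (Ico 0 R)) {r : ℝ} (hr : r ∈ Ioo 0 R) :
    u'' r = (Equaz.phaseField n h r (u r, u' r)).2 :=
  Equaz.equaz_iff.1 (H.equaz (Ioo_subset_Ico_self hr) hr.1)

theorem isIntegralCurveOn (H : SolOn n h α u u' u'' (Ico 0 R)) :
    IsIntegralCurveOn (fun r => (u r, u' r)) (Equaz.phaseField n h) (Ioo 0 R) := fun r hr => by
  have hderiv := (H.hasDerivAt hr).prodMk (H.hasDerivAt_deriv hr)
  rw [H.snd_deriv_eq hr] at hderiv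
  exact hderiv.hasDerivWithinAt

theorem pos_of_sq_div_two_lt_deriv {r : ℝ} (H : SolOn n h α u u' u'' (Ico 0 R))
    (hlt : ∀ s ∈ Ico 0 r, u s ^ 2 / 2 < u' s) (hr : r ∈ Ioo 0 R) : 0 < u r := by
  have hsub : Icc 0 r ⊆ Ico 0 R := Icc_subset_Ico_right hr.2
  have hmono : StrictMonoOn u (Icc 0 r) := by
    refine strictMonoOn_of_hasDerivWithinAt_pos (convex_Icc 0 r) (H.continuousOn.mono hsub)
      (f' := u') ?_ ?_ <;> rw [interior_Icc] <;> intro s hs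
    · exact (H.hasDerivAt ⟨hs.1, hs.2.trans hr.2⟩).hasDerivWithinAt
    · exact lt_of_le_of_lt (by positivity) (hlt s (Ioo_subset_Ico_self hs))
  calc 0 = u 0 := H.apply_zero.symm
    _ < u r := hmono (left_mem_Icc.2 hr.1.le) (right_mem_Icc.2 hr.1.le) hr.1

section Comparison

variable (hn : 1 ≤ n) (hhb : ∀ r : ℝ, 0 < r → -((n : ℝ) - 1) / r ≤ h r)
include hn hhb

theorem sq_div_two_lt_deriv_of_forall_Ico {t : ℝ} (H : SolOn n h α u u' u'' (Ico 0 R))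
    (ht : t ∈ Ioo 0 R) (hlt : ∀ s ∈ Ico 0 t, u s ^ 2 / 2 < u' s) : u t ^ 2 / 2 < u' t := by
  have hsub : Icc (t / 2) t ⊆ Ioo 0 R := fun s hs =>
    ⟨(half_pos ht.1).trans_le hs.1, hs.2.trans_lt ht.2⟩
  -- The comparison starts at `t / 2` because the coefficient `(n - 1) / s` is singular at `0`.
  have hu_cont := H.continuousOn.mono (hsub.trans Ioo_subset_Ico_self)
  have hu'_cont := H.continuousOn_deriv.mono (hsub.trans Ioo_subset_Ico_self)
  have hcoeff_cont : ContinuousOn (fun s => 2 * ((n - 1) / s + (n - 2) * u s)) (Icc (t / 2) t) :=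
    continuousOn_const.mul ((continuousOn_const.div continuousOn_id fun s hs =>
      (hsub hs).1.ne').add (continuousOn_const.mul hu_cont))
  refine sub_pos.1 (pos_of_deriv_add_mul_nonneg (f := fun s => u' s - u s ^ 2 / 2)
    (f' := fun s => u'' s - u s * u' s) (half_le_self ht.1.le)
    (hu'_cont.sub ((hu_cont.pow 2).div_const 2)) (fun s hs => ?_) hcoeff_cont (fun s hs => ?_)
    (sub_pos.2 (hlt _ ⟨(half_pos ht.1).le, half_lt_self ht.1⟩)))
  · have hs' := hsub (Ioo_subset_Icc_self hs)
    refine ((H.hasDerivAt_deriv hs').sub (((H.hasDerivAt hs').pow 2).div_const 2)).congr_deriv ?_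
    ring
  · have hs' := hsub (Ioo_subset_Icc_self hs)
    have hs_lt (x) (hx : x ∈ Ico 0 s) := hlt x ⟨hx.1, hx.2.trans hs.2⟩
    have hu_pos : 0 < u s := H.pos_of_sq_div_two_lt_deriv hs_lt hs'
    have hu'_pos : 0 < u' s := lt_of_le_of_lt (by positivity) (hlt s ⟨hs'.1.le, hs.2⟩)
    have hn' : (0 : ℝ) ≤ n - 1 := sub_nonneg.2 (Nat.one_le_cast.2 hn)
    rw [Equaz.deriv_sub_sq_div_two_add_mul_eq (H.equaz (Ioo_subset_Ico_self hs') hs'.1)]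
    have hs_pos := hs'.1
    have hh_nonneg := sub_nonneg.2 (hhb s hs_pos)
    positivity

theorem sq_div_two_lt_deriv (hα : 0 < α) (H : SolOn n h α u u' u'' (Ico 0 R)) {r : ℝ}
    (hr : r ∈ Ico 0 R) : u r ^ 2 / 2 < u' r := by
  have hsub : Icc 0 r ⊆ Ico 0 R := Icc_subset_Ico_right hr.2
  have hu_cont := H.continuousOn.mono hsub
  have hu'_cont := H.continuousOn_deriv.mono hsub
  refine sub_pos.1 (forall_Icc_pos_of_forall_Ico_pos (f := fun s => u' s - u s ^ 2 / 2)
    (hu'_cont.sub ((hu_cont.pow 2).div_const 2)) ?_ (fun t ht hpos => ?_) r (right_mem_Icc.2 hr.1))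
  · simpa [H.apply_zero, H.deriv_apply_zero] using hα
  · exact sub_pos.2 (H.sq_div_two_lt_deriv_of_forall_Ico hn hhb ⟨ht.1, ht.2.trans_lt hr.2⟩
      fun s hs => sub_pos.1 (hpos s hs))

theorem pos (hα : 0 < α) (H : SolOn n h α u u' u'' (Ico 0 R)) {r : ℝ} (hr : r ∈ Ioo 0 R) :
    0 < u r :=
  H.pos_of_sq_div_two_lt_deriv
    (fun _ hs => H.sq_div_two_lt_deriv hn hhb hα ⟨hs.1, hs.2.trans hr.2⟩) hr

theorem monotoneOn (hα : 0 < α) (H : SolOn n h α u u' u'' (Ico 0 R)) :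
    MonotoneOn u (Ico 0 R) := by
  refine monotoneOn_of_hasDerivWithinAt_nonneg (convex_Ico 0 R) H.continuousOn (f' := u') ?_ ?_ <;>
    rw [interior_Ico] <;> intro r hr
  · exact (H.hasDerivAt hr).hasDerivWithinAt
  · exact le_trans (by positivity)
      (H.sq_div_two_lt_deriv hn hhb hα (Ioo_subset_Ico_self hr)).le

theorem sub_half_mul_lt_inv (hα : 0 < α) (H : SolOn n h α u u' u'' (Ico 0 R)) {a b : ℝ}
    (ha : 0 < a) (hab : a ≤ b) (hb : b < R) : 1 / 2 * (b - a) < (u a)⁻¹ := by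
  have hsub : Icc a b ⊆ Ioo 0 R := fun s hs => ⟨ha.trans_le hs.1, hs.2.trans_lt hb⟩
  refine mul_sub_lt_inv_of_mul_sq_le_deriv hab
    (H.continuousOn.mono (hsub.trans Ioo_subset_Ico_self))
    (fun t ht => H.hasDerivAt (hsub (Ioo_subset_Icc_self ht)))
    (fun t ht => H.pos hn hhb hα (hsub ht)) fun t ht => ?_
  linarith [H.sq_div_two_lt_deriv hn hhb hα (Ioo_subset_Ico_self (hsub (Ioo_subset_Icc_self ht)))]

theorem not_solOn_Ici (hα : 0 < α) : ¬ SolOn n h α u u' u'' (Ici 0) := fun H => by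
  have hlt (b : ℝ) (hb : 1 ≤ b) : 1 / 2 * (b - 1) < (u 1)⁻¹ :=
    (H.mono (Ico_subset_Ici_self : Ico 0 (b + 1) ⊆ Ici 0)).sub_half_mul_lt_inv hn hhb hα one_pos hb
      (lt_add_one b)
  have hu_inv := hlt 1 le_rfl
  linarith [hlt (1 + 2 * (u 1)⁻¹) (by linarith)]

end Comparison

section Continuation

variable (hh : ContinuousOn h (Ioi 0))
include hh

theorem exists_abs_deriv_le_of_abs_le (H : SolOn n h α u u' u'' (Ico 0 R)) {a M : ℝ} (ha : 0 < a)
    (hM : ∀ r ∈ Ico a R, |u r| ≤ M) : ∃ C, ∀ r ∈ Ico a R, |u' r| ≤ C := by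
  have hcompact : IsCompact (Icc a R ×ˢ Icc (-M) M) := isCompact_Icc.prod isCompact_Icc
  have hsub : Icc a R ×ˢ Icc (-M) M ⊆ Ioi 0 ×ˢ univ :=
    prod_mono (fun r hr => ha.trans_le hr.1) (subset_univ _)
  obtain ⟨K, hK⟩ := hcompact.exists_bound_of_continuousOn
    ((Equaz.continuousOn_drag (n := n) hh).mono hsub)
  obtain ⟨L, hL⟩ := hcompact.exists_bound_of_continuousOn
    ((Equaz.continuousOn_force (n := n) hh).mono hsub)
  have hmem {r : ℝ} (hr : r ∈ Ico a R) : (r, u r) ∈ Icc a R ×ˢ Icc (-M) M :=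
    ⟨Ico_subset_Icc_self hr, abs_le.1 (hM r hr)⟩
  have hpos {r : ℝ} (hr : r ∈ Ico a R) : r ∈ Ioo 0 R := ⟨ha.trans_le hr.1, hr.2⟩
  refine exists_norm_le_of_norm_deriv_le_mul_add (abs_nonneg K) (abs_nonneg L)
    (fun r hr => H.hasDerivAt_deriv (hpos hr)) fun r hr => ?_
  calc ‖u'' r‖ = ‖Equaz.drag n h r (u r) * u' r + Equaz.force n h r (u r)‖ := by
        rw [H.snd_deriv_eq (hpos hr), Equaz.phaseField]
    _ ≤ ‖Equaz.drag n h r (u r)‖ * ‖u' r‖ + ‖Equaz.force n h r (u r)‖ :=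
        norm_add_le_of_le (norm_mul_le _ _) le_rfl
    _ ≤ |K| * ‖u' r‖ + |L| := by
        gcongr
        · exact (hK _ (hmem hr)).trans (le_abs_self K)
        · exact (hL _ (hmem hr)).trans (le_abs_self L)

-- `phaseField` has a junk value at `r = 0`, so the second derivative there is taken from `u''`.
theorem of_isIntegralCurveOn (hR : 0 < R) (H : SolOn n h α u u' u'' (Ico 0 R)) {R' : ℝ}
    {δ : ℝ → ℝ × ℝ} (hδ : IsIntegralCurveOn δ (Equaz.phaseField n h) (Ioo 0 R'))
    (heq : EqOn δ (fun r => (u r, u' r)) (Iio R)) :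
    SolOn n h α (fun r => (δ r).1) (fun r => (δ r).2)
      (update (fun r => (Equaz.phaseField n h r (δ r)).2) 0 (u'' 0)) (Ico 0 R') := by
  set v'' : ℝ → ℝ := update (fun r => (Equaz.phaseField n h r (δ r)).2) 0 (u'' 0)
  have h0 : (0 : ℝ) ∈ Ico 0 R := left_mem_Ico.2 hR
  have hnhds : Ico 0 R ∈ 𝓝[Ico 0 R'] 0 :=
    nhdsWithin_mono _ Ico_subset_Ici_self (Ico_mem_nhdsGE hR)
  have hfst : EqOn (fun r => (δ r).1) u (Ico 0 R) := fun r hr => congrArg Prod.fst (heq hr.2)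
  have hsnd : EqOn (fun r => (δ r).2) u' (Ico 0 R) := fun r hr => congrArg Prod.snd (heq hr.2)
  have hv''_of_pos {r : ℝ} (hr : 0 < r) : v'' r = (Equaz.phaseField n h r (δ r)).2 :=
    update_of_ne hr.ne' _ _
  have hv'' : EqOn v'' u'' (Ico 0 R) := fun r hr => by
    rcases hr.1.eq_or_lt with rfl | hr_pos
    · exact update_self _ _ _
    · rw [hv''_of_pos hr_pos, H.snd_deriv_eq ⟨hr_pos, hr.2⟩, heq hr.2]
  have hδ_deriv {r : ℝ} (hr : r ∈ Ioo 0 R') : HasDerivAt δ (Equaz.phaseField n h r (δ r)) r :=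
    (hδ r hr).hasDerivAt (isOpen_Ioo.mem_nhds hr)
  refine ⟨fun r hr => ?_, fun r hr => ?_, fun r hr => ?_, (hfst h0).trans H.apply_zero,
    (hsnd h0).trans H.deriv_apply_zero, fun r _ hr => Equaz.equaz_iff.2 (hv''_of_pos hr)⟩ <;>
    rcases hr.1.eq_or_lt with rfl | hr_pos
  · rw [hsnd h0]
    exact ((H.1 0 h0).congr hfst (hfst h0)).mono_of_mem_nhdsWithin hnhds
  · exact (hasFDerivAt_fst.comp_hasDerivAt r (hδ_deriv ⟨hr_pos, hr.2⟩)).hasDerivWithinAt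
  · rw [hv'' h0]
    exact ((H.2.1 0 h0).congr hsnd (hsnd h0)).mono_of_mem_nhdsWithin hnhds
  · rw [hv''_of_pos hr_pos]
    exact (hasFDerivAt_snd.comp_hasDerivAt r (hδ_deriv ⟨hr_pos, hr.2⟩)).hasDerivWithinAt
  · exact ((H.2.2.1 0 h0).congr hv'' (hv'' h0)).mono_of_mem_nhdsWithin hnhds
  · have hfield : ContinuousAt (uncurry (Equaz.phaseField n h)) (r, δ r) :=
      (Equaz.continuousOn_phaseField hh).continuousAt
        (prod_mem_nhds (Ioi_mem_nhds hr_pos) univ_mem)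
    have hcurve : ContinuousAt (fun s => (s, δ s)) r :=
      continuousAt_id.prodMk (hδ_deriv ⟨hr_pos, hr.2⟩).continuousAt
    have hcomp := (hfield.comp (f := fun s => (s, δ s)) hcurve).snd
    refine (hcomp.congr ?_).continuousWithinAt
    filter_upwards [Ioi_mem_nhds hr_pos] with s hs using (hv''_of_pos hs).symm

theorem not_maximalOn_of_abs_le (hR : 0 < R) (H : SolOn n h α u u' u'' (Ico 0 R)) {M : ℝ}
    (hM : ∀ r ∈ Ico 0 R, |u r| ≤ M) : ¬ MaximalOn n h α u R := by
  have hM' : ∀ r ∈ Ico (R / 2) R, |u r| ≤ M := fun r hr => hM r ⟨(half_pos hR).le.trans hr.1, hr.2⟩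
  obtain ⟨C, hC⟩ := H.exists_abs_deriv_le_of_abs_le hh (half_pos hR) hM'
  have hbound : ∀ᶠ r in 𝓝[<] R, ‖(u r, u' r)‖ ≤ max M C := by
    filter_upwards [Ico_mem_nhdsLT (half_lt_self hR)] with r hr
    exact max_le_max (hM' r hr) (hC r hr)
  obtain ⟨R', hRR', δ, hδ, heq⟩ := exists_isIntegralCurveOn_Ioo_extension_of_norm_le hR
    (Ioi_mem_nhds hR) H.isIntegralCurveOn hbound (Equaz.continuousOn_phaseField hh)
    (fun r _ p => Equaz.hasFDerivAt_phaseField p) (Equaz.continuousOn_phaseFieldDeriv hh)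
  exact not_not.2 ⟨R', _, _, _, hRR', H.of_isIntegralCurveOn hh hR hδ heq,
    fun r hr => congrArg Prod.fst (heq hr.2)⟩

end Continuation

theorem tendsto_atTop_of_maximalOn (hn : 1 ≤ n) (hh : ContinuousOn h (Ioi 0))
    (hhb : ∀ r : ℝ, 0 < r → -((n : ℝ) - 1) / r ≤ h r) (hα : 0 < α) (hR : 0 < R)
    (H : SolOn n h α u u' u'' (Ico 0 R)) (hmax : MaximalOn n h α u R) :
    Tendsto u (𝓝[<] R) atTop := by
  have hmono := H.monotoneOn hn hhb hα
  refine tendsto_nhdsLT_atTop_of_monotoneOn hmono fun ⟨M, hM⟩ => ?_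
  refine H.not_maximalOn_of_abs_le hh hR (M := M) (fun r hr => ?_) hmax
  have hu_nonneg : 0 ≤ u r := H.apply_zero.ge.trans (hmono (left_mem_Ico.2 hR) hr hr.1)
  rw [abs_of_nonneg hu_nonneg]
  exact hM (mem_image_of_mem u hr)

end SolOn

theorem nonexistence_alpha_pos_general (n : ℕ) (hn : 1 ≤ n) (h : ℝ → ℝ)
    (hhc : ContinuousOn h (Ioi 0)) (hhb : ∀ r : ℝ, 0 < r → -((n : ℝ) - 1) / r ≤ h r)
    (α : ℝ) (hα : 0 < α) :
    (¬ ∃ u u' u'' : ℝ → ℝ, SolOn n h α u u' u'' (Ici 0)) ∧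
    (∀ (u u' u'' : ℝ → ℝ) (R : ℝ), 0 < R →
      SolOn n h α u u' u'' (Ico 0 R) → MaximalOn n h α u R → Tendsto u (𝓝[<] R) atTop) :=
  ⟨fun ⟨_, _, _, H⟩ => SolOn.not_solOn_Ici hn hhb hα H,
    fun _ _ _ _ hR H hmax => H.tendsto_atTop_of_maximalOn hn hhc hhb hα hR hmax⟩

/-- **Theorem (nonexistence).** For `n ≥ 3`, `h` continuous on `[0,∞)` with
    `h(r) ≥ -(n-1)/r` for `r > 0`, and `α > 0`, the solution of (equaz) with
    `u(0) = 0`, `u'(0) = α` is not global: there is no solution on all of `[0,∞)`,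
    and a solution on a maximal interval `[0,R)` (necessarily `R < ∞`) satisfies
    `u(r) → +∞` as `r ↑ R`. -/
theorem nonexistence_alpha_pos (n : ℕ) (hn : 3 ≤ n) (h : ℝ → ℝ)
    (hhc : ContinuousOn h (Set.Ici 0))
    (hhb : ∀ r : ℝ, 0 < r → -((n : ℝ) - 1) / r ≤ h r)
    (α : ℝ) (hα : 0 < α) :
    (¬ ∃ u u' u'' : ℝ → ℝ, SolOn n h α u u' u'' (Set.Ici 0)) ∧
    (∀ (u u' u'' : ℝ → ℝ) (R : ℝ), 0 < R →
      SolOn n h α u u' u'' (Set.Ico 0 R) → MaximalOn n h α u R →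
      Filter.Tendsto u (nhdsWithin R (Set.Iio R)) Filter.atTop) :=
  nonexistence_alpha_pos_general n (by lia) h (hhc.mono Ioi_subset_Ici_self) hhb α hα
end

section
/- Let n ≥ 3 be an integer and let h be a continuous function on [0,∞) satisfying h(r) ≥ -(n-1)/r for all r > 0. Then any global C² solution u of the ODE u''(r) + ((n-1)/r)u'(r) − (n-2)u(r)³ − (2(n-1)/r)u(r)² − ((n-1)/r²)u(r) + (n-4)u(r)u'(r) = [u'(r) + u(r)/r]·h(r) on [0,∞) with u(0) = 0 and u'(0) = α ≠ 0 is necessarily strictly negative: u(r) < 0 for all r > 0. -/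
/-!
Write `ν` for the dimension, and put `v = r u` and `p = r v'`.  The equation becomes the first
order system `r v' = p`, `r p' = (r h - (ν - 4)(1 + v)) p + (ν - 2) v (v + 1) (v + 2)`, and the
bound on `h` reads `-(ν - 1) ≤ r h`.  If `v` and `v'` are positive at one point then some parabola
`p = e v²` with `0 < e < 1` lies below the solution there, and the lower bound on `r h` prevents
the solution from crossing it; so `(1 / v)' ≤ -e / r`, and `1 / v` would become negative as
`log r → ∞`.  Since `v` vanishes at the origin, a positive value of `v` would be preceded by such
a point, whence `v ≤ 0`.  A zero of `v` at `s > 0` would then be a maximum, so that `p` vanishes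
at `s` as well; backwards in `r` the energy `v² + p²` is controlled by the same lower bound on
`r h`, which forces `v = 0` on `(0, s]` and contradicts `u'(0) ≠ 0`.
-/

open Filter Set Topology

section Calculus

lemma pos_of_deriv_pos_at_first_zero {f f' : ℝ → ℝ} {a : ℝ}
    (hf : ∀ x, a ≤ x → HasDerivAt f (f' x) x) (ha : 0 < f a)
    (hzero : ∀ x, a < x → (∀ y ∈ Ico a x, 0 < f y) → f x = 0 → 0 < f' x) :
    ∀ x, a ≤ x → 0 < f x := by
  intro b hab
  by_contra! hb
  have hcont : ContinuousOn f (Icc a b) := fun x hx => (hf x hx.1).continuousAt.continuousWithinAt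
  obtain ⟨s, ⟨⟨has, hsb⟩, hfs⟩, hleast⟩ : ∃ s, IsLeast (Icc a b ∩ f ⁻¹' Iic 0) s :=
    (isCompact_Icc.of_isClosed_subset
      (hcont.preimage_isClosed_of_isClosed isClosed_Icc isClosed_Iic)
      inter_subset_left).exists_isLeast ⟨b, ⟨hab, le_rfl⟩, hb⟩
  have hpos : ∀ y ∈ Ico a s, 0 < f y := by
    intro y hy
    by_contra! hfy
    exact hy.2.not_ge (hleast ⟨⟨hy.1, hy.2.le.trans hsb⟩, hfy⟩)
  have has' : a < s := has.lt_of_ne (by rintro rfl; exact ha.not_ge hfs)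
  have hleft : ∀ᶠ y in 𝓝[<] s, y ∈ Ico a s :=
    mem_of_superset (Ioo_mem_nhdsLT has') Ioo_subset_Ico_self
  have hfs0 : f s = 0 := le_antisymm hfs <|
    ge_of_tendsto ((hf s has).continuousAt.mono_left nhdsWithin_le_nhds)
      (hleft.mono fun y hy => (hpos y hy).le)
  have hslope : Tendsto (slope f s) (𝓝[<] s) (𝓝 (f' s)) :=
    (hasDerivWithinAt_iff_tendsto_slope' self_notMem_Iio).1 (hf s has).hasDerivWithinAt
  refine (hzero s has' hpos hfs0).not_ge (le_of_tendsto hslope (hleft.mono fun y hy => ?_))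
  rw [slope_def_field, hfs0, sub_zero]
  exact div_nonpos_of_nonneg_of_nonpos (hpos y hy).le (sub_nonpos.2 hy.2.le)

lemma exists_lt_and_deriv_pos {f f' : ℝ → ℝ} {a b m : ℝ} (hab : a ≤ b)
    (hf : ∀ x ∈ Icc a b, HasDerivAt f (f' x) x) (ha : f a ≤ m) (hb : m < f b) :
    ∃ c ∈ Ioo a b, m < f c ∧ 0 < f' c := by
  have hcont : ContinuousOn f (Icc a b) := fun x hx => (hf x hx).continuousAt.continuousWithinAt
  obtain ⟨s, ⟨⟨has, hsb⟩, hfs⟩, hgreatest⟩ : ∃ s, IsGreatest (Icc a b ∩ f ⁻¹' Iic m) s :=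
    (isCompact_Icc.of_isClosed_subset
      (hcont.preimage_isClosed_of_isClosed isClosed_Icc isClosed_Iic)
      inter_subset_left).exists_isGreatest ⟨a, ⟨le_rfl, hab⟩, ha⟩
  have hfsb : f s < f b := lt_of_le_of_lt hfs hb
  have hsb' : s < b := hsb.lt_of_ne (by rintro rfl; exact hfsb.false)
  obtain ⟨c, hc, hslope⟩ := exists_hasDerivAt_eq_slope f f' hsb'
    (hcont.mono (Icc_subset_Icc_left has)) fun x hx => hf x ⟨has.trans hx.1.le, hx.2.le⟩
  refine ⟨c, ⟨has.trans_lt hc.1, hc.2⟩, ?_, ?_⟩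
  · by_contra! hfc
    exact hc.1.not_ge (hgreatest ⟨⟨has.trans hc.1.le, hc.2.le⟩, hfc⟩)
  · rw [hslope]
    exact div_pos (sub_pos.2 hfsb) (sub_pos.2 hsb')

lemma mul_exp_le_mul_exp_of_neg_mul_le_deriv {f f' : ℝ → ℝ} {K a b : ℝ} (hab : a ≤ b)
    (hf : ∀ x ∈ Icc a b, HasDerivAt f (f' x) x) (hf' : ∀ x ∈ Icc a b, -(K * f x) ≤ f' x) :
    f a * Real.exp (K * a) ≤ f b * Real.exp (K * b) := by
  have hderiv : ∀ x ∈ Icc a b, HasDerivAt (fun x => f x * Real.exp (K * x))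
      ((f' x + K * f x) * Real.exp (K * x)) x := fun x hx =>
    ((hf x hx).mul ((hasDerivAt_id x).const_mul K).exp).congr_deriv (by simp only [id]; ring)
  have hmono : MonotoneOn (fun x => f x * Real.exp (K * x)) (Icc a b) :=
    monotoneOn_of_hasDerivWithinAt_nonneg (convex_Icc a b)
      (fun x hx => (hderiv x hx).continuousAt.continuousWithinAt)
      (fun x hx => (hderiv x (interior_subset hx)).hasDerivWithinAt)
      (fun x hx => mul_nonneg (by linarith [hf' x (interior_subset hx)]) (Real.exp_pos _).le)
  exact hmono ⟨le_rfl, hab⟩ ⟨hab, le_rfl⟩ hab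

lemma not_forall_mul_sq_le_deriv_of_tendsto_atTop {f f' g g' : ℝ → ℝ} {a : ℝ}
    (hf : ∀ x, a ≤ x → HasDerivAt f (f' x) x) (hg : ∀ x, a ≤ x → HasDerivAt g (g' x) x)
    (hpos : ∀ x, a ≤ x → 0 < f x) (hg_top : Tendsto g atTop atTop) :
    ¬ ∀ x, a ≤ x → g' x * f x ^ 2 ≤ f' x := by
  intro hle
  have hderiv : ∀ x, a ≤ x → HasDerivAt (fun x => (f x)⁻¹ + g x) (-f' x / f x ^ 2 + g' x) x :=
    fun x hx => ((hf x hx).inv (hpos x hx).ne').add (hg x hx)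
  have hanti : AntitoneOn (fun x => (f x)⁻¹ + g x) (Ici a) := by
    refine antitoneOn_of_hasDerivWithinAt_nonpos (convex_Ici a)
      (fun x hx => (hderiv x hx).continuousAt.continuousWithinAt)
      (fun x hx => (hderiv x (interior_subset hx)).hasDerivWithinAt) fun x hx => ?_
    have hax : a ≤ x := interior_subset hx
    have := (le_div_iff₀ (pow_pos (hpos x hax) 2)).2 (hle x hax)
    rw [neg_div]
    linarith
  obtain ⟨x, hgx, hax⟩ :=
    ((hg_top.eventually_gt_atTop ((f a)⁻¹ + g a)).and (eventually_ge_atTop a)).exists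
  have hxa : (f x)⁻¹ + g x ≤ (f a)⁻¹ + g a := hanti self_mem_Ici hax hax
  linarith [inv_pos.2 (hpos x hax)]

end Calculus

/-- The system `r v' = p`, `r p' = (H - (ν - 4)(1 + v)) p + (ν - 2) v (v + 1) (v + 2)` at the
point `r`, which `v = r u`, `p = r v'` satisfy with `H = r h` when `u` solves (equaz) in
dimension `ν`. -/
structure ReducedSystemAt (ν : ℝ) (H v p : ℝ → ℝ) (r : ℝ) : Prop where
  hasDerivAt_fst : HasDerivAt v (p r / r) r
  hasDerivAt_snd : HasDerivAt p
    (((H r - (ν - 4) * (1 + v r)) * p r + (ν - 2) * v r * (v r + 1) * (v r + 2)) / r) r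

namespace ReducedSystemAt

variable {ν : ℝ} {H v p : ℝ → ℝ}

lemma hasDerivAt_parabola {r : ℝ} (hsol : ReducedSystemAt ν H v p r) (e : ℝ) :
    HasDerivAt (fun r => p r - e * v r ^ 2)
      (((H r - (ν - 4) * (1 + v r)) * p r + (ν - 2) * v r * (v r + 1) * (v r + 2)
        - 2 * e * v r * p r) / r) r :=
  (hsol.hasDerivAt_snd.sub ((hsol.hasDerivAt_fst.pow 2).const_mul e)).congr_deriv
    (by push_cast; ring)

lemma parabola_deriv_pos (hν : 2 ≤ ν) {e V P h : ℝ} (he₀ : 0 < e) (he₁ : e < 1)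
    (hV : 0 < V) (hh : -(ν - 1) ≤ h) (hP : P = e * V ^ 2) :
    0 < (h - (ν - 4) * (1 + V)) * P + (ν - 2) * V * (V + 1) * (V + 2) - 2 * e * V * P := by
  have hexpand : (h - (ν - 4) * (1 + V)) * P + (ν - 2) * V * (V + 1) * (V + 2) - 2 * e * V * P
      = e * V ^ 2 * (h + (ν - 1)) + 2 * V * (ν - 2) + V ^ 2 * ((ν - 2) * (3 - 2 * e) + e)
        + V ^ 3 * ((ν - 2 + 2 * e) * (1 - e)) := by
    rw [hP]; ring
  have : 0 ≤ ν - 2 := by linarith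
  have : 0 ≤ h + (ν - 1) := by linarith
  have : 0 < 1 - e := by linarith
  have : 0 < 3 - 2 * e := by linarith
  rw [hexpand]
  positivity

lemma fst_le_of_snd_nonneg {a s : ℝ} (ha : 0 < a) (has : a ≤ s)
    (hsol : ∀ r ∈ Icc a s, ReducedSystemAt ν H v p r) (hp : ∀ r ∈ Ico a s, 0 ≤ p r) :
    v a ≤ v s := by
  have hmono : MonotoneOn v (Icc a s) := by
    refine monotoneOn_of_hasDerivWithinAt_nonneg (convex_Icc a s)
      (fun r hr => (hsol r hr).hasDerivAt_fst.continuousAt.continuousWithinAt)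
      (fun r hr => (hsol r (interior_subset hr)).hasDerivAt_fst.hasDerivWithinAt) fun r hr => ?_
    rw [interior_Icc] at hr
    exact div_nonneg (hp r ⟨hr.1.le, hr.2⟩) (ha.trans hr.1).le
  exact hmono ⟨le_rfl, has⟩ ⟨has, le_rfl⟩ has

lemma parabola_pos (hν : 2 ≤ ν) {a e : ℝ} (ha : 0 < a) (he₀ : 0 < e) (he₁ : e < 1)
    (hsol : ∀ r, a ≤ r → ReducedSystemAt ν H v p r) (hH : ∀ r, a ≤ r → -(ν - 1) ≤ H r)
    (hva : 0 < v a) (hpa : 0 < p a - e * v a ^ 2) :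
    ∀ r, a ≤ r → 0 < p r - e * v r ^ 2 := by
  refine pos_of_deriv_pos_at_first_zero (fun r hr => (hsol r hr).hasDerivAt_parabola e) hpa ?_
  intro s has hpos hs
  have hvs : 0 < v s := hva.trans_le <|
    fst_le_of_snd_nonneg ha has.le (fun r hr => hsol r hr.1) fun r hr => by
      linarith [hpos r hr, mul_nonneg he₀.le (sq_nonneg (v r))]
  exact div_pos (parabola_deriv_pos hν he₀ he₁ hvs (hH s has.le) (sub_eq_zero.1 hs))
    (ha.trans has)

lemma not_pos_and_pos (hν : 2 ≤ ν) {a : ℝ} (ha : 0 < a)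
    (hsol : ∀ r, a ≤ r → ReducedSystemAt ν H v p r) (hH : ∀ r, a ≤ r → -(ν - 1) ≤ H r) :
    ¬ (0 < v a ∧ 0 < p a) := by
  rintro ⟨hva, hpa⟩
  obtain ⟨e, he₀, he⟩ := exists_between (lt_min one_pos (div_pos hpa (pow_pos hva 2)))
  obtain ⟨he₁, hea⟩ := lt_min_iff.1 he
  have hpar : ∀ r, a ≤ r → 0 < p r - e * v r ^ 2 :=
    parabola_pos hν ha he₀ he₁ hsol hH hva (sub_pos.2 ((lt_div_iff₀ (pow_pos hva 2)).1 hea))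
  have hv : ∀ r, a ≤ r → 0 < v r := fun r hr => hva.trans_le <|
    fst_le_of_snd_nonneg ha hr (fun t ht => hsol t ht.1) fun t ht => by
      linarith [hpar t ht.1, mul_nonneg he₀.le (sq_nonneg (v t))]
  refine not_forall_mul_sq_le_deriv_of_tendsto_atTop (g' := fun r => e * r⁻¹)
    (fun r hr => (hsol r hr).hasDerivAt_fst)
    (fun r hr => (Real.hasDerivAt_log (ha.trans_le hr).ne').const_mul e) hv
    (Real.tendsto_log_atTop.const_mul_atTop he₀) fun r hr => ?_
  have hr₀ : 0 < r := ha.trans_le hr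
  rw [le_div_iff₀ hr₀]
  calc e * r⁻¹ * v r ^ 2 * r = e * v r ^ 2 := by field_simp
    _ ≤ p r := (sub_pos.1 (hpar r hr)).le

lemma fst_nonpos (hν : 2 ≤ ν) (hsol : ∀ r, 0 < r → ReducedSystemAt ν H v p r)
    (hH : ∀ r, 0 < r → -(ν - 1) ≤ H r) (hv₀ : Tendsto v (𝓝[>] 0) (𝓝 0)) :
    ∀ r, 0 < r → v r ≤ 0 := by
  intro b hb
  by_contra! hvb
  obtain ⟨c, hvc, hc, hcb⟩ :=
    ((hv₀.eventually_le_const (half_pos hvb)).and (Ioo_mem_nhdsGT hb)).exists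
  obtain ⟨a, ⟨hca, -⟩, hva, hpa⟩ := exists_lt_and_deriv_pos hcb.le
    (fun r hr => (hsol r (hc.trans_le hr.1)).hasDerivAt_fst) hvc (half_lt_self hvb)
  have ha : 0 < a := hc.trans hca
  exact not_pos_and_pos hν ha (fun r hr => hsol r (ha.trans_le hr))
    (fun r hr => hH r (ha.trans_le hr))
    ⟨(half_pos hvb).trans hva, (div_pos_iff_of_pos_right ha).1 hpa⟩

lemma exists_neg_mul_energy_le_deriv {a s : ℝ} (ha : 0 < a)
    (hsol : ∀ r ∈ Icc a s, ReducedSystemAt ν H v p r) (hH : ∀ r ∈ Icc a s, -(ν - 1) ≤ H r) :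
    ∃ K : ℝ, ∃ E' : ℝ → ℝ, ∀ r ∈ Icc a s,
      HasDerivAt (fun r => v r ^ 2 + p r ^ 2) (E' r) r ∧ -(K * (v r ^ 2 + p r ^ 2)) ≤ E' r := by
  have hcont : ContinuousOn v (Icc a s) := fun r hr =>
    (hsol r hr).hasDerivAt_fst.continuousAt.continuousWithinAt
  have hne : ∀ r ∈ Icc a s, r ≠ 0 := fun r hr => (ha.trans_le hr.1).ne'
  obtain ⟨M, hM⟩ := isCompact_Icc.exists_bound_of_continuousOn
    (show ContinuousOn (fun r => (-(ν - 1) - (ν - 4) * (1 + v r)) / r) (Icc a s) by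
      fun_prop (disch := assumption))
  obtain ⟨N, hN⟩ := isCompact_Icc.exists_bound_of_continuousOn
    (show ContinuousOn (fun r => (1 + (ν - 2) * (v r + 1) * (v r + 2)) / r) (Icc a s) by
      fun_prop (disch := assumption))
  refine ⟨2 * M + N, _, fun r hr => ⟨((hsol r hr).hasDerivAt_fst.pow 2).add
    ((hsol r hr).hasDerivAt_snd.pow 2), ?_⟩⟩
  set β := (-(ν - 1) - (ν - 4) * (1 + v r)) / r with hβ
  set γ := (1 + (ν - 2) * (v r + 1) * (v r + 2)) / r with hγ
  have hβM : |β| ≤ M := hM r hr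
  have hγN : |γ| ≤ N := hN r hr
  have hM₀ : 0 ≤ M := (abs_nonneg β).trans hβM
  have hp : -(M * p r ^ 2) ≤ β * p r ^ 2 := by
    linarith [mul_le_mul_of_nonneg_right (neg_le_of_abs_le hβM) (sq_nonneg (p r))]
  have hcross : -(N * (v r ^ 2 + p r ^ 2)) ≤ 2 * γ * v r * p r := by
    obtain ⟨hl, hu⟩ := abs_le.1 hγN
    nlinarith [mul_nonneg (sub_nonneg.2 hu) (sq_nonneg (v r - p r)),
      mul_nonneg (neg_le_iff_add_nonneg.1 hl) (sq_nonneg (v r + p r))]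
  have hdamp : 0 ≤ 2 * ((H r + (ν - 1)) / r) * p r ^ 2 := by
    have := div_nonneg (neg_le_iff_add_nonneg.1 (hH r hr)) (ha.trans_le hr.1).le
    positivity
  calc -((2 * M + N) * (v r ^ 2 + p r ^ 2))
      ≤ -(2 * M * p r ^ 2) - N * (v r ^ 2 + p r ^ 2) := by
        linarith [mul_nonneg hM₀ (sq_nonneg (v r))]
    _ ≤ 2 * ((H r + (ν - 1)) / r) * p r ^ 2 + 2 * β * p r ^ 2 + 2 * γ * v r * p r := by linarith
    _ = _ := by rw [hβ, hγ]; push_cast; ring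

lemma fst_eq_zero_of_eq_zero {a s : ℝ} (ha : 0 < a) (has : a ≤ s)
    (hsol : ∀ r ∈ Icc a s, ReducedSystemAt ν H v p r) (hH : ∀ r ∈ Icc a s, -(ν - 1) ≤ H r)
    (hvs : v s = 0) (hps : p s = 0) : v a = 0 := by
  obtain ⟨K, E', hE⟩ := exists_neg_mul_energy_le_deriv ha hsol hH
  have hle : (v a ^ 2 + p a ^ 2) * Real.exp (K * a) ≤ (v s ^ 2 + p s ^ 2) * Real.exp (K * s) :=
    mul_exp_le_mul_exp_of_neg_mul_le_deriv has (fun r hr => (hE r hr).1) fun r hr => (hE r hr).2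
  have hEa : v a ^ 2 + p a ^ 2 ≤ 0 :=
    nonpos_of_mul_nonpos_left (hle.trans_eq (by simp [hvs, hps])) (Real.exp_pos _)
  exact pow_eq_zero_iff two_ne_zero |>.1 (by linarith [sq_nonneg (v a), sq_nonneg (p a)])

theorem fst_neg (hν : 2 ≤ ν) (hsol : ∀ r, 0 < r → ReducedSystemAt ν H v p r)
    (hH : ∀ r, 0 < r → -(ν - 1) ≤ H r) (hv₀ : Tendsto v (𝓝[>] 0) (𝓝 0))
    (hne : ∃ᶠ r in 𝓝[>] 0, v r ≠ 0) : ∀ r, 0 < r → v r < 0 := by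
  intro s hs
  have hnonpos : ∀ r, 0 < r → v r ≤ 0 := fst_nonpos hν hsol hH hv₀
  refine (hnonpos s hs).lt_of_ne fun hvs => ?_
  have hmax : IsLocalMax v s := by
    filter_upwards [Ioi_mem_nhds hs] with r hr
    exact (hnonpos r hr).trans_eq hvs.symm
  have hps : p s = 0 :=
    (div_eq_zero_iff.1 (hmax.hasDerivAt_eq_zero (hsol s hs).hasDerivAt_fst)).resolve_right hs.ne'
  obtain ⟨a, hva, ha, has⟩ := (hne.and_eventually (Ioo_mem_nhdsGT hs)).exists
  exact hva (fst_eq_zero_of_eq_zero ha has.le (fun r hr => hsol r (ha.trans_le hr.1))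
    (fun r hr => hH r (ha.trans_le hr.1)) hvs hps)

end ReducedSystemAt

/-- The ODE (equaz) at `r`, with the dimension `n` replaced by a real parameter `ν`. -/
def RealEquaz (ν : ℝ) (h u u' u'' : ℝ → ℝ) (r : ℝ) : Prop :=
  u'' r + (ν - 1) / r * u' r - (ν - 2) * u r ^ 3 - 2 * (ν - 1) / r * u r ^ 2
    - (ν - 1) / r ^ 2 * u r + (ν - 4) * u r * u' r = (u' r + u r / r) * h r

lemma RealEquaz.reducedSystemAt {ν : ℝ} {h u u' u'' : ℝ → ℝ} {r : ℝ}
    (hode : RealEquaz ν h u u' u'' r) (hr : r ≠ 0) (hu : HasDerivAt u (u' r) r)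
    (hu' : HasDerivAt u' (u'' r) r) :
    ReducedSystemAt ν (fun r => r * h r) (fun r => r * u r)
      (fun r => r * u r + r ^ 2 * u' r) r where
  hasDerivAt_fst := ((hasDerivAt_id r).mul hu).congr_deriv (by simp only [id]; field_simp)
  hasDerivAt_snd := by
    refine (((hasDerivAt_id r).mul hu).add (((hasDerivAt_id r).pow 2).mul hu')).congr_deriv ?_
    have hu'' : u'' r = (u' r + u r / r) * h r - ((ν - 1) / r * u' r - (ν - 2) * u r ^ 3
        - 2 * (ν - 1) / r * u r ^ 2 - (ν - 1) / r ^ 2 * u r + (ν - 4) * u r * u' r) := by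
      rw [← hode]; ring
    simp only [id, Pi.pow_apply, hu'']
    field_simp
    push_cast
    ring

theorem global_solutions_are_negative_general {ν : ℝ} (hν : 2 ≤ ν) {h u u' u'' : ℝ → ℝ}
    (hh : ∀ r, 0 < r → -(ν - 1) / r ≤ h r)
    (hu : ∀ r ∈ Ici (0 : ℝ), HasDerivWithinAt u (u' r) (Ici 0) r)
    (hu' : ∀ r, 0 < r → HasDerivAt u' (u'' r) r)
    (hode : ∀ r, 0 < r → RealEquaz ν h u u' u'' r) (hu₀ : u 0 = 0) (hu'₀ : u' 0 ≠ 0) :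
    ∀ r, 0 < r → u r < 0 := by
  have hsol (r : ℝ) (hr : 0 < r) := (hode r hr).reducedSystemAt hr.ne'
    ((hu r hr.le).hasDerivAt (Ici_mem_nhds hr)) (hu' r hr)
  have hH (r : ℝ) (hr : 0 < r) : -(ν - 1) ≤ r * h r := (div_le_iff₀' hr).1 (hh r hr)
  have hu_zero : HasDerivWithinAt u (u' 0) (Ioi 0) 0 := (hu 0 self_mem_Ici).mono Ioi_subset_Ici_self
  have hv₀ : Tendsto (fun r => r * u r) (𝓝[>] 0) (𝓝 0) := by
    simpa [hu₀] using
      (tendsto_id.mono_left nhdsWithin_le_nhds).mul hu_zero.continuousWithinAt.tendsto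
  have hv_ne : ∀ᶠ r in 𝓝[>] 0, r * u r ≠ 0 := by
    have hu_ne : ∀ᶠ r in 𝓝[>] 0, u r ≠ 0 := by
      simpa using hu_zero.eventually_ne (c := 0) hu'₀
    filter_upwards [hu_ne, self_mem_nhdsWithin] with r hur hr using mul_ne_zero (ne_of_gt hr) hur
  exact fun r hr => neg_of_mul_neg_right
    (ReducedSystemAt.fst_neg hν hsol hH hv₀ hv_ne.frequently r hr) hr.le

/-- **Theorem.** For `n ≥ 3` and `h` continuous on `[0,∞)` with `h(r) ≥ -(n-1)/r` for all
    `r > 0`, any global C² solution of (equaz) with `u(0) = 0`, `u'(0) = α ≠ 0` is strictly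
    negative: `u(r) < 0` for all `r > 0`. -/
theorem global_solutions_are_negative (n : ℕ) (hn : 3 ≤ n) (h : ℝ → ℝ)
    (hhc : ContinuousOn h (Set.Ici 0))
    (hhb : ∀ r : ℝ, 0 < r → -((n : ℝ) - 1) / r ≤ h r)
    (α : ℝ) (hα : α ≠ 0) (u u' u'' : ℝ → ℝ)
    (hu : SolOn n h α u u' u'' (Set.Ici 0)) :
    ∀ r : ℝ, 0 < r → u r < 0 := by
  obtain ⟨hd, hd', -, hu₀, rfl, hode⟩ := hu
  exact global_solutions_are_negative_general (by exact_mod_cast (by lia : 2 ≤ n)) hhb hd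
    (fun r hr => (hd' r hr.le).hasDerivAt (Ici_mem_nhds hr)) (fun r hr => hode r hr.le hr) hu₀ hα
end
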